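/- arXiv:1510.06435 — 2 statements merged into one kernel-verified Lean document; each statement's English description precedes it below -/
import Mathlib

section
/- (Kummer's second quadratic identity) Let β₁, β₂ be real numbers with β₁ > 0 and β₂ > 0, and let Λ be a real number with 0 < Λ < 3 − 2√2. Then ₂F₁(β₁+β₂−1/2, β₂; 2β₂; 1 − ((1+Λ)/(1−Λ))²) = (1−Λ)^{2β₁+2β₂−1} · ₂F₁(β₁+β₂−1/2, β₁; β₂+1/2; Λ²). (Note 1 − ((1+Λ)/(1−Λ))² = −4Λ/(1−Λ)², which has absolute value less than 1 exactly when Λ < 3 − 2√2.) -/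
/-- Pochhammer symbol `(x)_n` in `ℝ`. -/
noncomputable def rpoch (x : ℝ) (n : ℕ) : ℝ := (ascPochhammer ℝ n).eval x

/-- Gauss' hypergeometric series `₂F₁` (real). -/
noncomputable def hyp2F1 (a b c z : ℝ) : ℝ :=
  ∑' n : ℕ, rpoch a n * rpoch b n / (rpoch c n * (n.factorial : ℝ)) * z ^ n

lemma rpoch_zero (x : ℝ) : rpoch x 0 = 1 := by simp [rpoch]

lemma rpoch_succ (x : ℝ) (n : ℕ) : rpoch x (n + 1) = rpoch x n * (x + n) := by
  simp [rpoch, ascPochhammer_succ_eval]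

lemma rpoch_succ_left (x : ℝ) (n : ℕ) : rpoch x (n + 1) = x * rpoch (x + 1) n := by
  simp [rpoch, ascPochhammer_succ_left, Polynomial.eval_comp]

lemma rpoch_pos {x : ℝ} (hx : 0 < x) (n : ℕ) : 0 < rpoch x n := ascPochhammer_pos n x hx

lemma rpoch_abs_le {x y : ℝ} (h : |x| ≤ y) (n : ℕ) : |rpoch x n| ≤ rpoch y n := by
  induction n with
  | zero => simp [rpoch_zero]
  | succ n ih =>
    rw [rpoch_succ, rpoch_succ, abs_mul]
    have h1 : |x + n| ≤ y + n := by
      refine (abs_add_le _ _).trans ?_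
      rw [Nat.abs_cast]; linarith
    exact mul_le_mul ih h1 (abs_nonneg _) ((abs_nonneg _).trans ih)

lemma rpoch_le {x y : ℝ} (hx : 0 < x) (h : x ≤ y) (n : ℕ) : rpoch x n ≤ rpoch y n := by
  have := rpoch_abs_le (x := x) (y := y) (by rwa [abs_of_pos hx]) n
  exact (le_abs_self _).trans this

lemma hasSum_binom (s : ℝ) {x : ℝ} (hx : |x| < 1) :
    HasSum (fun k : ℕ => rpoch s k / (k.factorial : ℝ) * x ^ k) ((1 - x) ^ (-s)) := by
  by_cases h1 : (1 : ℝ) - x ≤ 0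
  · have := (abs_lt.1 hx).2; linarith
  have h := (Real.one_div_one_sub_rpow_hasFPowerSeriesOnBall_zero s).hasSum (y := x)
    (by simpa [Metric.mem_eball, edist_dist, Real.dist_eq] using hx)
  convert! h using 1
  · funext k
    have h2 : Ring.choose (s + k - 1) k = rpoch s k / (k.factorial : ℝ) := by
      have h3 := Ring.factorial_nsmul_multichoose_eq_ascPochhammer s k
      rw [Polynomial.ascPochhammer_smeval_eq_eval] at h3
      rw [Ring.choose]
      have h4 : (k.factorial : ℝ) ≠ 0 := by positivity
      rw [eq_div_iff h4, rpoch, ← h3]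
      rw [nsmul_eq_mul, mul_comm]
      congr 2; ring
    simp [FormalMultilinearSeries.ofScalars, h2]
  · rw [Real.rpow_neg (by linarith)]; simp

/-- Coefficients. -/
noncomputable def kc (a b : ℝ) (n : ℕ) : ℝ :=
  rpoch a n * rpoch b n / (rpoch (2 * b) n * (n.factorial : ℝ)) * (-4) ^ n

noncomputable def kt (a b : ℝ) (n k : ℕ) : ℝ :=
  kc a b n * (rpoch (2 * a + 2 * n) k / (k.factorial : ℝ))

lemma kc_succ (a b : ℝ) (hb : 0 < b) (n : ℕ) :
    kc a b (n + 1) * ((2 * b + n) * (n + 1)) = kc a b n * (-4 * (a + n) * (b + n)) := by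
  have h1 := (rpoch_pos (x := 2 * b) (by linarith) n).ne'
  have h2 : (n.factorial : ℝ) ≠ 0 := by positivity
  have h3 : 2 * b + n ≠ 0 := by positivity
  have h4 : (n : ℝ) + 1 ≠ 0 := by positivity
  unfold kc
  rw [rpoch_succ, rpoch_succ, rpoch_succ, Nat.factorial_succ]
  push_cast
  field_simp
  ring

noncomputable def kS (a b : ℝ) (m : ℕ) : ℝ :=
  ∑ n ∈ Finset.range (m + 1), kt a b n (m - n)

noncomputable def kG (a b : ℝ) (m n : ℕ) : ℝ :=
  -2 * (a + m + 1) * n * (2 * b + n - 1) * (2 * a + 2 * n - 1) * kc a b n *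
    (rpoch (2 * a + 2 * n) (m - n) / ((m - n + 2).factorial : ℝ))

lemma kG_step (a b : ℝ) (hb : 0 < b) (n k : ℕ) :
    (2 * b + 1 + (n + 1 + k : ℕ)) * ((n + 1 + k : ℕ) + 2) * kt a b n (k + 3)
      - (2 * a + (n + 1 + k : ℕ)) * (2 * a - 2 * b + 1 + (n + 1 + k : ℕ)) * kt a b n (k + 1)
      = kG a b (n + 1 + k) (n + 1) - kG a b (n + 1 + k) n := by
  have e1 : n + 1 + k - (n + 1) = k := by omega
  have e2 : n + 1 + k - n = k + 1 := by omega
  have hc := kc_succ a b hb n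
  have h3 : 2 * b + n ≠ 0 := by positivity
  have h4 : (n : ℝ) + 1 ≠ 0 := by positivity
  have hc' : kc a b (n + 1) = kc a b n * (-4 * (a + n) * (b + n)) / ((2 * b + n) * (n + 1)) := by
    rw [eq_div_iff (by positivity)]; exact hc
  have hr : rpoch (2 * a + 2 * n) (k + 1) * (2 * a + 2 * n + k + 1)
      = (2 * a + 2 * n) * (2 * a + 2 * n + 1) * rpoch (2 * a + 2 * (n + 1)) k := by
    have := rpoch_succ (2 * a + 2 * n) (k + 1)
    rw [rpoch_succ_left, rpoch_succ_left] at this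
    push_cast at this
    rw [show 2 * a + 2 * ((n : ℝ) + 1) = 2 * a + 2 * n + 1 + 1 by ring]
    linarith
  have hf : (k.factorial : ℝ) ≠ 0 := by positivity
  have hK1 : (k : ℝ) + 1 ≠ 0 := by positivity
  have hK2 : (k : ℝ) + 2 ≠ 0 := by positivity
  have hK3 : (k : ℝ) + 3 ≠ 0 := by positivity
  have f2 : ((k + 2).factorial : ℝ) = (k + 2) * ((k + 1) * k.factorial) := by
    simp only [Nat.factorial_succ]; push_cast; ring
  have f3 : ((k + 3).factorial : ℝ) = (k + 3) * ((k + 2) * ((k + 1) * k.factorial)) := by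
    simp only [Nat.factorial_succ]; push_cast; ring
  have f1 : ((k + 1).factorial : ℝ) = (k + 1) * k.factorial := by
    simp only [Nat.factorial_succ]; push_cast; ring
  have g1 : kG a b (n + 1 + k) (n + 1) = 4 * (a + n + k + 2) * (b + n) * kc a b n *
      (rpoch (2 * a + 2 * n) (k + 1) * (2 * a + 2 * n + k + 1)) /
        ((k + 2) * ((k + 1) * k.factorial)) := by
    rw [hr]
    unfold kG
    rw [e1, hc', f2]
    push_cast
    field_simp
    ring
  rw [g1]
  unfold kG kt
  rw [e2, rpoch_succ _ (k + 2), rpoch_succ _ (k + 1), show k + 1 + 2 = k + 3 from rfl, f1, f3]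
  push_cast
  field_simp
  ring

lemma kS_rec (a b : ℝ) (hb : 0 < b) (m : ℕ) :
    (2 * b + 1 + m) * (m + 2) * kS a b (m + 2)
      = (2 * a + m) * (2 * a - 2 * b + 1 + m) * kS a b m := by
  have hp : ∀ N, N ≤ m → ∑ n ∈ Finset.range N,
      ((2 * b + 1 + m) * (m + 2) * kt a b n (m + 2 - n)
        - (2 * a + m) * (2 * a - 2 * b + 1 + m) * kt a b n (m - n)) = kG a b m N := by
    intro N hN
    induction N with
    | zero => simp [kG]
    | succ N ih =>
      rw [Finset.sum_range_succ, ih (by omega)]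
      obtain ⟨k, rfl⟩ := Nat.exists_eq_add_of_le hN
      rw [show N + 1 + k + 2 - N = k + 3 by omega, show N + 1 + k - N = k + 1 by omega]
      have := kG_step a b hb N k
      linarith
  have h := hp m le_rfl
  rw [Finset.sum_sub_distrib, ← Finset.mul_sum, ← Finset.mul_sum] at h
  unfold kS
  rw [Finset.sum_range_succ, Finset.sum_range_succ, Finset.sum_range_succ, Finset.sum_range_succ]
  rw [show m + 2 - m = 2 by omega, show m + 2 - (m + 1) = 1 by omega,
    show m + 2 - (m + 2) = 0 by omega, show m - m = 0 by omega]
  have hc1 := kc_succ a b hb m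
  have hc2 := kc_succ a b hb (m + 1)
  have g : kG a b m m = -2 * (a + m + 1) * m * (2 * b + m - 1) * (2 * a + 2 * m - 1) * kc a b m / 2 := by
    simp [kG, rpoch_zero]; ring
  have t1 : kt a b m 2 = kc a b m * ((2 * a + 2 * m) * (2 * a + 2 * m + 1)) / 2 := by
    simp [kt, rpoch_zero, rpoch_succ, Nat.factorial]; ring
  have t2 : kt a b (m + 1) 1 = kc a b (m + 1) * (2 * a + 2 * m + 2) := by
    simp [kt, rpoch_zero, rpoch_succ, Nat.factorial]; left; ring
  have t3 : kt a b (m + 2) 0 = kc a b (m + 2) := by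
    simp [kt, rpoch_zero]
  have t4 : kt a b m 0 = kc a b m := by
    simp [kt, rpoch_zero]
  rw [t1, t2, t3, t4]
  rw [g] at h
  push_cast at hc2
  rw [show m + 1 + 1 = m + 2 from rfl] at hc2
  have h3 : 2 * b + (m : ℝ) ≠ 0 := by positivity
  have h4 : (m : ℝ) + 1 ≠ 0 := by positivity
  have h5 : 2 * b + ((m : ℝ) + 1) ≠ 0 := by positivity
  have h6 : (m : ℝ) + 1 + 1 ≠ 0 := by positivity
  rw [← eq_div_iff (by positivity)] at hc1 hc2
  have key : (2 * b + 1 + m) * (m + 2) * (kc a b m * ((2 * a + 2 * m) * (2 * a + 2 * m + 1)) / 2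
      + kc a b (m + 1) * (2 * a + 2 * m + 2) + kc a b (m + 2))
      - (2 * a + m) * (2 * a - 2 * b + 1 + m) * kc a b m
      + -2 * (a + m + 1) * m * (2 * b + m - 1) * (2 * a + 2 * m - 1) * kc a b m / 2 = 0 := by
    rw [hc2, hc1]
    field_simp
    ring
  linear_combination key + h

lemma kS_zero (a b : ℝ) : kS a b 0 = 1 := by
  simp [kS, kt, kc, rpoch_zero]

lemma kS_one (a b : ℝ) (hb : 0 < b) : kS a b 1 = 0 := by
  simp [kS, kt, kc, rpoch_zero, rpoch_succ, Finset.sum_range_succ]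
  field_simp
  ring

lemma kS_odd (a b : ℝ) (hb : 0 < b) (j : ℕ) : kS a b (2 * j + 1) = 0 := by
  induction j with
  | zero => simpa using kS_one a b hb
  | succ j ih =>
    have h := kS_rec a b hb (2 * j + 1)
    rw [ih, mul_zero] at h
    rcases mul_eq_zero.1 h with h | h
    · exact absurd h (by positivity)
    · exact h

lemma kS_even (a b : ℝ) (hb : 0 < b) (j : ℕ) : kS a b (2 * j) =
    rpoch a j * rpoch (a - b + 1 / 2) j / (rpoch (b + 1 / 2) j * (j.factorial : ℝ)) := by
  induction j with
  | zero => simp [kS_zero, rpoch_zero]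
  | succ j ih =>
    have h := kS_rec a b hb (2 * j)
    rw [ih] at h
    have h1 := (rpoch_pos (x := b + 1 / 2) (by linarith) j).ne'
    have h2 : (j.factorial : ℝ) ≠ 0 := by positivity
    have h3 : 2 * b + 1 + 2 * (j : ℝ) ≠ 0 := by positivity
    have h3' : b + 1 / 2 + (j : ℝ) ≠ 0 := by positivity
    have h4 : (j : ℝ) + 1 ≠ 0 := by positivity
    have h5 : (2 * b + 1 + 2 * (j : ℝ)) * (2 * j + 2) ≠ 0 := by positivity
    rw [show 2 * (j + 1) = 2 * j + 2 by ring]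
    push_cast at h
    apply mul_left_cancel₀ h5
    rw [h, rpoch_succ, rpoch_succ, rpoch_succ, Nat.factorial_succ]
    push_cast
    field_simp

lemma kummer_main (a b L : ℝ) (hb : 0 < b) (hL0 : 0 < L) (hL1 : L < 1)
    (hL : 4 * L / (1 - L) ^ 2 < 1) :
    hyp2F1 a b (2 * b) (-4 * L / (1 - L) ^ 2) =
      (1 - L) ^ (2 * a) * hyp2F1 a (a - b + 1 / 2) (b + 1 / 2) (L ^ 2) := by
  have hd : 0 < 1 - L := by linarith
  have hLa : |L| < 1 := by rwa [abs_of_pos hL0]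
  let f : ℕ × ℕ → ℝ := fun p => kt a b p.1 p.2 * L ^ (p.1 + p.2)
  have hrow : ∀ n, HasSum (fun k => f (n, k))
      (kc a b n * L ^ n * (1 - L) ^ (-(2 * a + 2 * n))) := by
    intro n
    have := (hasSum_binom (2 * a + 2 * n) hLa).mul_left (kc a b n * L ^ n)
    convert! this using 1
    funext k
    simp only [f, kt, pow_add]; ring
  have hpow : ∀ (s : ℝ) (n : ℕ), (1 - L) ^ (-(s + 2 * n)) = (1 - L) ^ (-s) * (((1 - L) ^ 2)⁻¹) ^ n := by
    intro s n
    rw [neg_add, Real.rpow_add hd, Real.rpow_neg hd.le (2 * n), inv_pow, ← pow_mul]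
    congr 2
    rw [← Real.rpow_natCast]; push_cast; rfl
  have hcabs : ∀ n, |kc a b n| ≤ |rpoch a n / (n.factorial : ℝ)| * 4 ^ n := by
    intro n
    have h1 := rpoch_pos hb n
    have h2 := rpoch_le hb (by linarith : b ≤ 2 * b) n
    have h3 : rpoch b n / rpoch (2 * b) n ≤ 1 := (div_le_one (h1.trans_le h2)).2 h2
    have h4 : 0 ≤ rpoch b n / rpoch (2 * b) n := by
      have := h1.trans_le h2; positivity
    have : kc a b n = (rpoch a n / (n.factorial : ℝ)) * (rpoch b n / rpoch (2 * b) n) * (-4) ^ n := by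
      unfold kc; rw [mul_comm (rpoch (2 * b) n), mul_div_mul_comm]
    rw [this, abs_mul, abs_mul, abs_of_nonneg h4, abs_pow]
    norm_num
    exact mul_le_of_le_one_right (abs_nonneg _) h3
  have hsum : Summable f := by
    let g : ℕ × ℕ → ℝ := fun p => |rpoch a p.1 / (p.1.factorial : ℝ)| * 4 ^ p.1 * L ^ p.1 *
      (rpoch (2 * |a| + 2 * p.1) p.2 / (p.2.factorial : ℝ) * L ^ p.2)
    have hg0 : 0 ≤ g := by
      intro p
      have : 0 ≤ rpoch (2 * |a| + 2 * p.1) p.2 := by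
        refine (abs_nonneg _).trans (rpoch_abs_le (x := 0) ?_ _)
        rw [abs_zero]; positivity
      simp only [g, Pi.zero_apply]
      positivity
    have hgrow : ∀ n, HasSum (fun k => g (n, k)) (|rpoch a n / (n.factorial : ℝ)| * 4 ^ n * L ^ n *
        (1 - L) ^ (-(2 * |a| + 2 * n))) := fun n =>
      (hasSum_binom (2 * |a| + 2 * n) hLa).mul_left _
    have hg : Summable g := by
      rw [summable_prod_of_nonneg hg0]
      refine ⟨fun n => (hgrow n).summable, ?_⟩
      have hz : 0 ≤ 4 * L / (1 - L) ^ 2 := by positivity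
      have := ((hasSum_binom a (x := 4 * L / (1 - L) ^ 2) (by rwa [abs_of_nonneg hz])).summable.abs).mul_right
        ((1 - L) ^ (-(2 * |a|)))
      refine this.congr fun n => ?_
      rw [(hgrow n).tsum_eq, hpow, abs_mul, abs_pow, abs_of_nonneg hz, div_eq_mul_inv (4 * L), mul_pow, mul_pow]
      ring
    refine Summable.of_norm_bounded hg fun p => ?_
    simp only [f, g, kt, Real.norm_eq_abs]
    rw [abs_mul, abs_mul, abs_div, abs_pow, abs_of_pos hL0, Nat.abs_cast, pow_add]
    have h1 := hcabs p.1
    have h2 : |rpoch (2 * a + 2 * p.1) p.2| ≤ rpoch (2 * |a| + 2 * p.1) p.2 := by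
      apply rpoch_abs_le
      refine (abs_add_le _ _).trans (le_of_eq ?_)
      rw [abs_mul, abs_mul, Nat.abs_cast]; norm_num
    calc _ = |kc a b p.1| * L ^ p.1 * (|rpoch (2 * a + 2 * p.1) p.2| / (p.2.factorial : ℝ) * L ^ p.2) := by ring
      _ ≤ _ := by gcongr
  have hA : ∑' p, f p = (1 - L) ^ (-(2 * a)) * hyp2F1 a b (2 * b) (-4 * L / (1 - L) ^ 2) := by
    rw [hsum.tsum_prod, hyp2F1, ← tsum_mul_left]
    congr 1; funext n
    rw [(hrow n).tsum_eq, hpow, kc, div_eq_mul_inv (-4 * L), mul_pow, mul_pow]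
    ring
  have hB : ∑' p, f p = hyp2F1 a (a - b + 1 / 2) (b + 1 / 2) (L ^ 2) := by
    rw [← (Finset.HasAntidiagonal.sigmaAntidiagonalEquivProd (A := ℕ)).tsum_eq f]
    have hs2 : Summable fun c => f (Finset.HasAntidiagonal.sigmaAntidiagonalEquivProd (A := ℕ) c) :=
      ((Finset.HasAntidiagonal.sigmaAntidiagonalEquivProd (A := ℕ)).summable_iff.2 hsum)
    rw [Summable.tsum_sigma' (fun n => (hasSum_fintype _).summable) hs2]
    have h1 : ∀ m : ℕ, ∑' (c : Finset.HasAntidiagonal.antidiagonal m),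
        f (Finset.HasAntidiagonal.sigmaAntidiagonalEquivProd (A := ℕ) ⟨m, c⟩) = kS a b m * L ^ m := by
      intro m
      rw [tsum_fintype]
      simp only [Finset.HasAntidiagonal.sigmaAntidiagonalEquivProd_apply]
      rw [Finset.sum_coe_sort (Finset.HasAntidiagonal.antidiagonal m) f,
        Finset.Nat.sum_antidiagonal_eq_sum_range_succ_mk, kS, Finset.sum_mul]
      refine Finset.sum_congr rfl fun n hn => ?_
      have : n + (m - n) = m := by have := Finset.mem_range.1 hn; omega
      simp only [f, this]
    simp only [h1]
    have hinj : Function.Injective (fun j : ℕ => 2 * j) := fun i j h => by simpa using h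
    rw [← hinj.tsum_eq, hyp2F1]
    · congr 1; funext j
      rw [kS_even a b hb, pow_mul]
    · intro m hm
      rcases Nat.even_or_odd' m with ⟨j, rfl | rfl⟩
      · exact ⟨j, rfl⟩
      · simp [kS_odd a b hb] at hm
  rw [← hB, hA, ← mul_assoc, ← Real.rpow_add hd]
  simp

/-- Kummer's second quadratic identity. -/
theorem statement6 (β₁ β₂ Λ : ℝ) (hβ₁ : 0 < β₁) (hβ₂ : 0 < β₂)
    (hΛ0 : 0 < Λ) (hΛ1 : Λ < 3 - 2 * Real.sqrt 2) :
    hyp2F1 (β₁ + β₂ - 1 / 2) β₂ (2 * β₂) (1 - ((1 + Λ) / (1 - Λ)) ^ 2) =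
      (1 - Λ) ^ (2 * β₁ + 2 * β₂ - 1) *
      hyp2F1 (β₁ + β₂ - 1 / 2) β₁ (β₂ + 1 / 2) (Λ ^ 2) := by
  have hs : Real.sqrt 2 ^ 2 = 2 := Real.sq_sqrt (by norm_num)
  have hs1 : 1 < Real.sqrt 2 := by
    rw [Real.lt_sqrt] <;> norm_num
  have h1 : Λ < 1 := by linarith
  have hd : 0 < 1 - Λ := by linarith
  have hL : 4 * Λ / (1 - Λ) ^ 2 < 1 := by
    rw [div_lt_one (by positivity)]
    nlinarith
  have h := kummer_main (β₁ + β₂ - 1 / 2) β₂ Λ hβ₂ hΛ0 h1 hL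
  have e1 : 1 - ((1 + Λ) / (1 - Λ)) ^ 2 = -4 * Λ / (1 - Λ) ^ 2 := by
    have := hd.ne'
    field_simp; ring
  rw [e1, h]
  congr 2
  · ring
  · ring
end

section
/- Let β₁, β₂ be real numbers with β₂ < 1 and β₁ + β₂ > 1/2, and let λ be a real number with 0 < λ < 1. Then ∫₀^λ x^{β₁+β₂−3/2} (1−x)^{−β₂} (λ−x)^{−β₂} dx = λ^{β₁−1/2} · Γ(β₁+β₂−1/2) Γ(1−β₂) / Γ(β₁+1/2) · ₂F₁(β₁+β₂−1/2, β₂; β₁+1/2; λ). (This evaluates the period integral of dx/y over the line segment [0, λ] for the superelliptic curve y^{2r} = x^{3r−p−q}(x−1)^{p}(x−λ)^{p} with β₁ = q/(2r), β₂ = p/(2r).) -/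
open MeasureTheory

theorem coef_eq (b : ℝ) (n : ℕ) : Ring.choose (b + n - 1) n = rpoch b n / (n.factorial : ℝ) := by
  rw [Ring.choose, show b + n - 1 - n + 1 = b by ring, eq_div_iff (by positivity), rpoch,
    ← Polynomial.ascPochhammer_smeval_eq_eval, ← Ring.factorial_nsmul_multichoose_eq_ascPochhammer,
    nsmul_eq_mul, mul_comm]

theorem binom_hasSum (b x : ℝ) (h0 : 0 ≤ x) (h1 : x < 1) :
    HasSum (fun n : ℕ => rpoch b n / (n.factorial : ℝ) * x ^ n) ((1 - x) ^ (-b)) := by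
  have h := (Real.one_div_one_sub_rpow_hasFPowerSeriesOnBall_zero b).hasSum (y := x) (by
    rw [mem_eball_zero_iff, Real.enorm_eq_ofReal h0]
    simpa using h1)
  rw [Real.rpow_neg (by linarith)]
  simpa [coef_eq, FormalMultilinearSeries.ofScalars_apply_eq, mul_comm, one_div] using h

theorem Gamma_rpoch (a : ℝ) (ha : 0 < a) (n : ℕ) :
    Real.Gamma (a + n) = rpoch a n * Real.Gamma a := by
  induction n with
  | zero => simp [rpoch]
  | succ n ih =>
    have : a + (n : ℝ) ≠ 0 := by positivity
    rw [Nat.cast_succ, ← add_assoc, Real.Gamma_add_one this, ih, rpoch, rpoch,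
      ascPochhammer_succ_eval]
    ring

theorem beta_scaled (a b l : ℝ) (ha : 0 < a) (hb : 0 < b) (hl : 0 < l) :
    ∫ x in Set.Ioo 0 l, x ^ (a - 1) * (l - x) ^ (b - 1) =
      l ^ (a + b - 1) * (Real.Gamma a * Real.Gamma b / Real.Gamma (a + b)) := by
  have h := Complex.betaIntegral_scaled (a : ℂ) (b : ℂ) hl
  rw [Complex.betaIntegral_eq_Gamma_mul_div _ _ (by simpa) (by simpa),
    intervalIntegral.integral_of_le hl.le, integral_Ioc_eq_integral_Ioo] at h
  have e : ∫ x in Set.Ioo 0 l, ((x : ℂ) ^ ((a : ℂ) - 1) * ((l : ℂ) - x) ^ ((b : ℂ) - 1)) =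
      ∫ x in Set.Ioo 0 l, ((x ^ (a - 1) * (l - x) ^ (b - 1) : ℝ) : ℂ) := by
    refine setIntegral_congr_fun measurableSet_Ioo fun x hx => ?_
    have h1 : 0 ≤ l - x := by linarith [hx.2]
    rw [Complex.ofReal_mul, Complex.ofReal_cpow hx.1.le, Complex.ofReal_cpow h1]
    push_cast
    rfl
  rw [e, integral_complex_ofReal, ← Complex.ofReal_add, Complex.Gamma_ofReal, Complex.Gamma_ofReal,
    Complex.Gamma_ofReal, ← Complex.ofReal_one, ← Complex.ofReal_sub,
    ← Complex.ofReal_cpow hl.le] at h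
  exact_mod_cast h

theorem beta_integrable (a b l : ℝ) (ha : 0 < a) (hb : 0 < b) (hl : 0 < l) :
    IntegrableOn (fun x : ℝ => x ^ (a - 1) * (l - x) ^ (b - 1)) (Set.Ioo 0 l) := by
  by_contra h
  have h1 := integral_undef h
  rw [beta_scaled a b l ha hb hl] at h1
  have := Real.Gamma_pos_of_pos ha
  have := Real.Gamma_pos_of_pos hb
  have := Real.Gamma_pos_of_pos (add_pos ha hb)
  have h2 : 0 < l ^ (a + b - 1) * (Real.Gamma a * Real.Gamma b / Real.Gamma (a + b)) := by
    positivity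
  exact h2.ne' h1

theorem euler_int (a b d l : ℝ) (ha : 0 < a) (hb : 0 < b) (hl : 0 < l) (hl1 : l < 1) :
    ∫ x in Set.Ioo 0 l, x ^ (a - 1) * (1 - x) ^ (-d) * (l - x) ^ (b - 1) =
      l ^ (a + b - 1) * (Real.Gamma a * Real.Gamma b / Real.Gamma (a + b)) *
        hyp2F1 a d (a + b) l := by
  set F : ℕ → ℝ → ℝ := fun n x =>
    rpoch d n / (n.factorial : ℝ) * (x ^ (a + n - 1) * (l - x) ^ (b - 1)) with hF
  have han : ∀ n : ℕ, 0 < a + n := fun n => by positivity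
  have hint : ∀ n, IntegrableOn (F n) (Set.Ioo 0 l) := fun n =>
    (beta_integrable (a + n) b l (han n) hb hl).const_mul _
  have hpow : ∀ n : ℕ, ∀ x ∈ Set.Ioo 0 l, x ^ (a + n - 1) = x ^ (a - 1) * x ^ n := by
    intro n x hx
    rw [← Real.rpow_natCast, ← Real.rpow_add hx.1]
    congr 1
    ring
  have hsum : Summable fun n => ∫ x in Set.Ioo 0 l, ‖F n x‖ := by
    have hs := (binom_hasSum d l hl.le hl1).summable.norm.mul_right
      (∫ x in Set.Ioo 0 l, x ^ (a - 1) * (l - x) ^ (b - 1))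
    refine Summable.of_nonneg_of_le (fun n => by positivity) (fun n => ?_) hs
    rw [← integral_const_mul]
    refine setIntegral_mono_on (hint n).norm
      ((beta_integrable a b l ha hb hl).const_mul _) measurableSet_Ioo fun x hx => ?_
    have h1 : 0 ≤ l - x := by linarith [hx.2]
    have h0 : 0 ≤ x := hx.1.le
    have h2 : 0 ≤ x ^ (a - 1) * (l - x) ^ (b - 1) := by positivity
    have h3 : x ^ n ≤ l ^ n := pow_le_pow_left₀ h0 hx.2.le n
    rw [hF]
    simp only []
    rw [hpow n x hx, norm_mul, norm_mul _ (l ^ n), norm_pow, Real.norm_of_nonneg hl.le, Real.norm_of_nonneg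
      (by positivity : 0 ≤ x ^ (a - 1) * x ^ n * (l - x) ^ (b - 1)), mul_assoc ‖rpoch d n / (n.factorial : ℝ)‖ (l ^ n)]
    refine mul_le_mul_of_nonneg_left ?_ (norm_nonneg _)
    calc _ = x ^ n * (x ^ (a - 1) * (l - x) ^ (b - 1)) := by ring
      _ ≤ _ := mul_le_mul_of_nonneg_right h3 h2
  have key := (hasSum_integral_of_summable_integral_norm hint hsum).tsum_eq
  have e : ∫ x in Set.Ioo 0 l, x ^ (a - 1) * (1 - x) ^ (-d) * (l - x) ^ (b - 1) =
      ∫ x in Set.Ioo 0 l, ∑' n, F n x := by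
    refine setIntegral_congr_fun measurableSet_Ioo fun x hx => ?_
    have h := ((binom_hasSum d x hx.1.le (hx.2.trans hl1)).mul_left
      (x ^ (a - 1) * (l - x) ^ (b - 1))).tsum_eq
    rw [mul_right_comm, ← h]
    refine tsum_congr fun n => ?_
    rw [hF]
    simp only []
    rw [hpow n x hx]
    ring
  rw [e, ← key, hyp2F1, ← tsum_mul_left]
  refine tsum_congr fun n => ?_
  rw [hF]
  simp only []
  rw [integral_const_mul, beta_scaled _ _ _ (han n) hb hl, show a + n + b = a + b + n by ring,
    Gamma_rpoch a ha, Gamma_rpoch (a + b) (add_pos ha hb),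
    show a + b + n - 1 = a + b - 1 + n by ring, Real.rpow_add hl, Real.rpow_natCast]
  have h1 := (Real.Gamma_pos_of_pos (add_pos ha hb)).ne'
  have h2 : rpoch (a + b) n ≠ 0 := (ascPochhammer_pos n _ (add_pos ha hb)).ne'
  field_simp

/-- Period integral over `[0, λ]` of `dx/y` for the superelliptic curve
`y^{2r} = x^{3r−p−q}(x−1)^{p}(x−λ)^{p}`. -/
theorem statement10 (β₁ β₂ lam : ℝ) (hβ₂ : β₂ < 1) (hβ : 1 / 2 < β₁ + β₂)
    (hl0 : 0 < lam) (hl1 : lam < 1) :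
    ∫ x in Set.Ioo 0 lam,
        x ^ (β₁ + β₂ - 3 / 2) * (1 - x) ^ (-β₂) * (lam - x) ^ (-β₂) =
      lam ^ (β₁ - 1 / 2) *
        (Real.Gamma (β₁ + β₂ - 1 / 2) * Real.Gamma (1 - β₂) / Real.Gamma (β₁ + 1 / 2)) *
        hyp2F1 (β₁ + β₂ - 1 / 2) β₂ (β₁ + 1 / 2) lam := by
  have h := euler_int (β₁ + β₂ - 1 / 2) (1 - β₂) β₂ lam (by linarith) (by linarith) hl0 hl1
  rw [show β₁ + β₂ - 1 / 2 + (1 - β₂) = β₁ + 1 / 2 by ring,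
    show β₁ + β₂ - 1 / 2 - 1 = β₁ + β₂ - 3 / 2 by ring,
    show 1 - β₂ - 1 = -β₂ by ring, show β₁ + 1 / 2 - 1 = β₁ - 1 / 2 by ring] at h
  exact h
end
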